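/- Generalized x-momentum conservation law for the potential Kawahara–KP equation: if v solves the potential Kawahara–KP equation and f : ℝ → ℝ is any smooth function, then ∂_t T + ∂_x Φˣ + ∂_y Φʸ = 0 holds at every point of ℝ³, where T := (1/2)·v_x²·f(t) + v·f'(t), Φˣ := ((1/2)·σ·v_y² + β·v_x·v_xxx - (1/2)·β·v_xx² + (1/3)·v_x³ + v_xxxxx·v_x - v_xx·v_xxxx + (1/2)·v_xxx²)·f(t) - ( x·(β·v_xxx + v_xxxxx + (1/2)·v_x² + v_t) - (β·v_xx + v_xxxx) )·f'(t) - (1/(2σ))·y²·(β·v_xxx + v_xxxxx + (1/2)·v_x² + v_t)·f''(t), and Φʸ := -σ·f(t)·v_x·v_y + σ·x·f'(t)·v_y + ((1/2)·y²·v_y - y·v)·f''(t). -/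

import Mathlib

/-- Partial derivative in `t` of a function `v (t, x, y)` given in curried form. -/
noncomputable def pt (v : ℝ → ℝ → ℝ → ℝ) : ℝ → ℝ → ℝ → ℝ :=
  fun t x y => deriv (fun s => v s x y) t

/-- Partial derivative in `x` of a function `v (t, x, y)` given in curried form. -/
noncomputable def px (v : ℝ → ℝ → ℝ → ℝ) : ℝ → ℝ → ℝ → ℝ :=
  fun t x y => deriv (fun s => v t s y) x

/-- Partial derivative in `y` of a function `v (t, x, y)` given in curried form. -/
noncomputable def py (v : ℝ → ℝ → ℝ → ℝ) : ℝ → ℝ → ℝ → ℝ :=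
  fun t x y => deriv (fun s => v t x s) y

/-- The potential Kawahara–KP operator:
`v_tx + v_x·v_xx + β·v_xxxx + v_xxxxxx - σ·v_yy`. -/
noncomputable def KKP (β σ : ℝ) (v : ℝ → ℝ → ℝ → ℝ) : ℝ → ℝ → ℝ → ℝ :=
  fun t x y =>
    px (pt v) t x y + px v t x y * px (px v) t x y
      + β * px (px (px (px v))) t x y
      + px (px (px (px (px (px v))))) t x y
      - σ * py (py v) t x y

/-- The linearization of the potential Kawahara–KP equation at `v`, applied to `p`:
`p_tx + v_xx·p_x + v_x·p_xx + β·p_xxxx + p_xxxxxx - σ·p_yy`. -/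
noncomputable def KKPlin (β σ : ℝ) (v p : ℝ → ℝ → ℝ → ℝ) : ℝ → ℝ → ℝ → ℝ :=
  fun t x y =>
    px (pt p) t x y + px (px v) t x y * px p t x y + px v t x y * px (px p) t x y
      + β * px (px (px (px p))) t x y
      + px (px (px (px (px (px p))))) t x y
      - σ * py (py p) t x y

def Sm (v : ℝ → ℝ → ℝ → ℝ) : Prop :=
  ContDiff ℝ (⊤ : ℕ∞) (fun q : ℝ × ℝ × ℝ => v q.1 q.2.1 q.2.2)

theorem Sm.fd {v : ℝ → ℝ → ℝ → ℝ} (h : Sm v) (q : ℝ × ℝ × ℝ) :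
    HasFDerivAt (fun q : ℝ × ℝ × ℝ => v q.1 q.2.1 q.2.2)
      (fderiv ℝ (fun q : ℝ × ℝ × ℝ => v q.1 q.2.1 q.2.2) q) q :=
  (ContDiff.differentiable h (by simp) q).hasFDerivAt

theorem Sm.ht0 {v : ℝ → ℝ → ℝ → ℝ} (h : Sm v) (t x y : ℝ) :
    HasDerivAt (fun s => v s x y)
      (fderiv ℝ (fun q : ℝ × ℝ × ℝ => v q.1 q.2.1 q.2.2) (t, x, y) (1, 0, 0)) t :=
  (h.fd (t, x, y)).comp_hasDerivAt (f := fun s => ((s, x, y) : ℝ × ℝ × ℝ)) t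
    ((hasDerivAt_id t).prodMk (hasDerivAt_const t (x, y)))

theorem Sm.hx0 {v : ℝ → ℝ → ℝ → ℝ} (h : Sm v) (t x y : ℝ) :
    HasDerivAt (fun s => v t s y)
      (fderiv ℝ (fun q : ℝ × ℝ × ℝ => v q.1 q.2.1 q.2.2) (t, x, y) (0, 1, 0)) x :=
  (h.fd (t, x, y)).comp_hasDerivAt (f := fun s => ((t, s, y) : ℝ × ℝ × ℝ)) x
    ((hasDerivAt_const x t).prodMk ((hasDerivAt_id x).prodMk (hasDerivAt_const x y)))

theorem Sm.hy0 {v : ℝ → ℝ → ℝ → ℝ} (h : Sm v) (t x y : ℝ) :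
    HasDerivAt (fun s => v t x s)
      (fderiv ℝ (fun q : ℝ × ℝ × ℝ => v q.1 q.2.1 q.2.2) (t, x, y) (0, 0, 1)) y :=
  (h.fd (t, x, y)).comp_hasDerivAt (f := fun s => ((t, x, s) : ℝ × ℝ × ℝ)) y
    ((hasDerivAt_const y t).prodMk ((hasDerivAt_const y x).prodMk (hasDerivAt_id y)))

theorem Sm.ht {v : ℝ → ℝ → ℝ → ℝ} (h : Sm v) (t x y : ℝ) :
    HasDerivAt (fun s => v s x y) (pt v t x y) t :=
  (h.ht0 t x y).differentiableAt.hasDerivAt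

theorem Sm.hx {v : ℝ → ℝ → ℝ → ℝ} (h : Sm v) (t x y : ℝ) :
    HasDerivAt (fun s => v t s y) (px v t x y) x :=
  (h.hx0 t x y).differentiableAt.hasDerivAt

theorem Sm.hy {v : ℝ → ℝ → ℝ → ℝ} (h : Sm v) (t x y : ℝ) :
    HasDerivAt (fun s => v t x s) (py v t x y) y :=
  (h.hy0 t x y).differentiableAt.hasDerivAt

theorem Sm.dir {v : ℝ → ℝ → ℝ → ℝ} (h : Sm v) (e : ℝ × ℝ × ℝ) :
    Sm (fun t x y => fderiv ℝ (fun q : ℝ × ℝ × ℝ => v q.1 q.2.1 q.2.2) (t, x, y) e) :=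
  (ContDiff.fderiv_right (m := (⊤ : ℕ∞)) h (by simp)).clm_apply contDiff_const

theorem Sm.pt_eq {v : ℝ → ℝ → ℝ → ℝ} (h : Sm v) : pt v = fun t x y =>
    fderiv ℝ (fun q : ℝ × ℝ × ℝ => v q.1 q.2.1 q.2.2) (t, x, y) (1, 0, 0) := by
  funext t x y; exact (h.ht0 t x y).deriv

theorem Sm.px_eq {v : ℝ → ℝ → ℝ → ℝ} (h : Sm v) : px v = fun t x y =>
    fderiv ℝ (fun q : ℝ × ℝ × ℝ => v q.1 q.2.1 q.2.2) (t, x, y) (0, 1, 0) := by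
  funext t x y; exact (h.hx0 t x y).deriv

theorem Sm.py_eq {v : ℝ → ℝ → ℝ → ℝ} (h : Sm v) : py v = fun t x y =>
    fderiv ℝ (fun q : ℝ × ℝ × ℝ => v q.1 q.2.1 q.2.2) (t, x, y) (0, 0, 1) := by
  funext t x y; exact (h.hy0 t x y).deriv

theorem Sm.pt {v : ℝ → ℝ → ℝ → ℝ} (h : Sm v) : Sm (pt v) := by
  rw [h.pt_eq]; exact h.dir _

theorem Sm.px {v : ℝ → ℝ → ℝ → ℝ} (h : Sm v) : Sm (px v) := by
  rw [h.px_eq]; exact h.dir _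

theorem Sm.py {v : ℝ → ℝ → ℝ → ℝ} (h : Sm v) : Sm (py v) := by
  rw [h.py_eq]; exact h.dir _

theorem Sm.symm2 {v : ℝ → ℝ → ℝ → ℝ} (h : Sm v) (q e e' : ℝ × ℝ × ℝ) :
    fderiv ℝ (fun q => fderiv ℝ (fun q : ℝ × ℝ × ℝ => v q.1 q.2.1 q.2.2) q e) q e' =
    fderiv ℝ (fun q => fderiv ℝ (fun q : ℝ × ℝ × ℝ => v q.1 q.2.1 q.2.2) q e') q e := by
  have hd : DifferentiableAt ℝ (fderiv ℝ (fun q : ℝ × ℝ × ℝ => v q.1 q.2.1 q.2.2)) q :=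
    (ContDiff.fderiv_right (m := (⊤ : ℕ∞)) h (by simp)).differentiable (by simp) q
  have hs := second_derivative_symmetric (fun q => h.fd q) hd.hasFDerivAt e e'
  rw [fderiv_clm_apply hd (differentiableAt_const _),
    fderiv_clm_apply hd (differentiableAt_const _)]
  simp [hs]

theorem Sm.tx {v : ℝ → ℝ → ℝ → ℝ} (h : Sm v) (t x y : ℝ) :
    _root_.pt (_root_.px v) t x y = _root_.px (_root_.pt v) t x y := by
  rw [h.px.pt_eq, h.pt.px_eq, h.px_eq, h.pt_eq]
  exact h.symm2 (t, x, y) _ _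

theorem Sm.yx {v : ℝ → ℝ → ℝ → ℝ} (h : Sm v) (t x y : ℝ) :
    _root_.py (_root_.px v) t x y = _root_.px (_root_.py v) t x y := by
  rw [h.px.py_eq, h.py.px_eq, h.px_eq, h.py_eq]
  exact h.symm2 (t, x, y) _ _

/-- Generalized x-momentum conservation law for the potential Kawahara–KP equation. -/
theorem gen_x_momentum_conservation_KKP (β σ : ℝ) (hβ : β ≠ 0) (hσ : σ = 1 ∨ σ = -1)
    (v : ℝ → ℝ → ℝ → ℝ)
    (hv : ContDiff ℝ (⊤ : ℕ∞) (fun q : ℝ × ℝ × ℝ => v q.1 q.2.1 q.2.2))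
    (hsol : ∀ t x y : ℝ, KKP β σ v t x y = 0)
    (f : ℝ → ℝ) (hf : ContDiff ℝ (⊤ : ℕ∞) f)
    (T Φx Φy : ℝ → ℝ → ℝ → ℝ)
    (hT : T = fun t x y => (1 / 2) * (px v t x y) ^ 2 * f t + v t x y * deriv f t)
    (hΦx : Φx = fun t x y =>
      ((1 / 2) * σ * (py v t x y) ^ 2 + β * px v t x y * px (px (px v)) t x y
          - (1 / 2) * β * (px (px v) t x y) ^ 2 + (1 / 3) * (px v t x y) ^ 3
          + px (px (px (px (px v)))) t x y * px v t x y
          - px (px v) t x y * px (px (px (px v))) t x y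
          + (1 / 2) * (px (px (px v)) t x y) ^ 2) * f t
        - (x * (β * px (px (px v)) t x y + px (px (px (px (px v)))) t x y
              + (1 / 2) * (px v t x y) ^ 2 + pt v t x y)
            - (β * px (px v) t x y + px (px (px (px v))) t x y)) * deriv f t
        - (1 / (2 * σ)) * y ^ 2 * (β * px (px (px v)) t x y
            + px (px (px (px (px v)))) t x y + (1 / 2) * (px v t x y) ^ 2
            + pt v t x y) * deriv (deriv f) t)
    (hΦy : Φy = fun t x y =>
      - σ * f t * px v t x y * py v t x y + σ * x * deriv f t * py v t x y
        + ((1 / 2) * y ^ 2 * py v t x y - y * v t x y) * deriv (deriv f) t) :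
    ∀ t x y : ℝ, pt T t x y + px Φx t x y + py Φy t x y = 0 := by
  intro t x y
  have h : Sm v := hv
  have hf1 : ContDiff ℝ (⊤ : ℕ∞) (deriv f) := (contDiff_infty_iff_deriv.1 hf).2
  have d0 : HasDerivAt f (deriv f t) t := (hf.differentiable (by simp) t).hasDerivAt
  have d1 : HasDerivAt (deriv f) (deriv (deriv f) t) t :=
    (hf1.differentiable (by simp) t).hasDerivAt
  have x1 := h.px.hx t x y
  have x2 := h.px.px.hx t x y
  have x3 := h.px.px.px.hx t x y
  have x4 := h.px.px.px.px.hx t x y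
  have x5 := h.px.px.px.px.px.hx t x y
  have xy := h.py.hx t x y
  have xt := h.pt.hx t x y
  have X := hasDerivAt_id' x
  have Y := hasDerivAt_id' y
  have eT := ((((h.px.ht t x y).pow 2).const_mul (1 / 2)).mul d0).add ((h.ht t x y).mul d1)
  have A := (((x3.const_mul β).add x5).add ((x1.pow 2).const_mul (1 / 2))).add xt
  have eX := ((((((((((xy.pow 2).const_mul ((1 / 2) * σ)).add ((x1.const_mul β).mul x3)).sub
    ((x2.pow 2).const_mul ((1 / 2) * β))).add ((x1.pow 3).const_mul (1 / 3))).add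
    (x5.mul x1)).sub (x2.mul x4)).add ((x3.pow 2).const_mul (1 / 2))).mul_const (f t)).sub
    (((X.mul A).sub ((x2.const_mul β).add x4)).mul_const (deriv f t))).sub
    ((A.const_mul ((1 / (2 * σ)) * y ^ 2)).mul_const (deriv (deriv f) t))
  have y0 := h.hy t x y
  have y1 := h.px.hy t x y
  have yy := h.py.hy t x y
  have eY := (((y1.const_mul (- σ * f t)).mul yy).add
    (yy.const_mul (σ * x * deriv f t))).add
    (((((Y.pow 2).const_mul (1 / 2)).mul yy).sub (Y.mul y0)).mul_const (deriv (deriv f) t))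
  have rT := (show pt T t x y = deriv _ _ by rw [hT]; rfl).trans eT.deriv
  have rX := (show px Φx t x y = deriv _ _ by rw [hΦx]; rfl).trans eX.deriv
  have rY := (show py Φy t x y = deriv _ _ by rw [hΦy]; rfl).trans eY.deriv
  have K := hsol t x y
  unfold KKP at K
  rw [rT, rX, rY, h.tx, h.yx]
  simp only [Pi.add_apply, Pi.mul_apply, Pi.sub_apply, Pi.pow_apply]
  rcases hσ with rfl | rfl
  · linear_combination (px v t x y * f t - x * deriv f t - y ^ 2 / 2 * deriv (deriv f) t) * K
  · linear_combination (px v t x y * f t - x * deriv f t + y ^ 2 / 2 * deriv (deriv f) t) * K
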